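/- (Bogolioubov–Krylov) Let S be an abelian semigroup acting on a non-empty compact Hausdorff space X from the left, with x ↦ s·x continuous for each s ∈ S. Then there exists a left S-invariant Radon probability measure on X. -/

import Mathlib

open BoundedContinuousFunction MeasureTheory Filter Topology
open scoped CompactlySupported

noncomputable section

def BKMk {X : Type*} [TopologicalSpace X] (A : Module.End ℝ C(X, ℝ)) : Prop :=
  ∀ (f : C(X, ℝ)) (c : ℝ), (∀ x, f x ≤ c) → ∀ x, A f x ≤ c

theorem BKMk.one {X : Type*} [TopologicalSpace X] : BKMk (1 : Module.End ℝ C(X, ℝ)) :=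
  fun _ _ h => h

theorem BKMk.mul {X : Type*} [TopologicalSpace X] {A B : Module.End ℝ C(X, ℝ)}
    (hA : BKMk A) (hB : BKMk B) : BKMk (A * B) :=
  fun f c h => hA (B f) c (hB f c h)

theorem BKMk.pow {X : Type*} [TopologicalSpace X] {A : Module.End ℝ C(X, ℝ)}
    (hA : BKMk A) (n : ℕ) : BKMk (A ^ n) := by
  induction n with
  | zero => simpa using BKMk.one
  | succ n ih => rw [pow_succ]; exact ih.mul hA

theorem BKMk.lower {X : Type*} [TopologicalSpace X] {A : Module.End ℝ C(X, ℝ)}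
    (hA : BKMk A) (f : C(X, ℝ)) (c : ℝ) (h : ∀ x, c ≤ f x) (x : X) : c ≤ A f x := by
  have := hA (-f) (-c) (fun x => by simpa using h x) x
  simpa using this

def bkAvg {X : Type*} [TopologicalSpace X] (A : Module.End ℝ C(X, ℝ)) (n : ℕ) :
    Module.End ℝ C(X, ℝ) := ((n + 1 : ℝ)⁻¹) • ∑ i ∈ Finset.range (n + 1), A ^ i

theorem BKMk.avg {X : Type*} [TopologicalSpace X] {A : Module.End ℝ C(X, ℝ)}
    (hA : BKMk A) (n : ℕ) : BKMk (bkAvg A n) := by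
  intro f c h x
  have h1 : bkAvg A n f x = (n + 1 : ℝ)⁻¹ * ∑ i ∈ Finset.range (n + 1), (A ^ i) f x := by
    simp [bkAvg, LinearMap.sum_apply]
  have h2 : ∑ i ∈ Finset.range (n + 1), (A ^ i) f x ≤ (n + 1 : ℝ) * c := by
    have := Finset.sum_le_sum (s := Finset.range (n + 1))
      (fun i _ => (hA.pow i) f c h x)
    simpa using this
  have hn : (0 : ℝ) < n + 1 := by positivity
  rw [h1, inv_mul_le_iff₀ hn]
  exact h2

theorem bkAvg_apply_sub {X : Type*} [TopologicalSpace X] (A : Module.End ℝ C(X, ℝ)) (n : ℕ)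
    (f : C(X, ℝ)) (x : X) :
    bkAvg A n (A f - f) x = (n + 1 : ℝ)⁻¹ * ((A ^ (n + 1)) f x - f x) := by
  have h := geom_sum_mul A (n + 1)
  have h2 : bkAvg A n (A f - f) = (n + 1 : ℝ)⁻¹ • ((A ^ (n + 1)) f - f) := by
    have := congrArg (fun B : Module.End ℝ C(X, ℝ) => (n + 1 : ℝ)⁻¹ • B f) h
    simpa only [bkAvg, LinearMap.smul_apply, Module.End.mul_apply, LinearMap.sub_apply,
      Module.End.one_apply] using this
  rw [h2]; simp

theorem bk_functional {S X : Type*} [TopologicalSpace X] [CompactSpace X] [Nonempty X]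
    (T : S → Module.End ℝ C(X, ℝ)) (hT : ∀ s, BKMk (T s)) (hcomm : ∀ s t, Commute (T s) (T t)) :
    ∃ L : C(X, ℝ) →ₗ[ℝ] ℝ, (∀ f c, (∀ x, f x ≤ c) → L f ≤ c) ∧ ∀ s f, L (T s f) = L f := by
  let M : Submonoid (Module.End ℝ C(X, ℝ)) :=
    Submonoid.closure {A | ∃ s n, A = bkAvg (T s) n}
  have hM : ∀ A ∈ M, BKMk A := by
    intro A hA
    refine Submonoid.closure_induction (motive := fun A _ => BKMk A) ?_ BKMk.one
      (fun _ _ _ _ h h' => h.mul h') hA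
    rintro _ ⟨s, n, rfl⟩
    exact (hT s).avg n
  have hMc : ∀ A ∈ M, ∀ B ∈ M, A * B = B * A := by
    intro A hA B hB
    refine Submonoid.closure_induction₂ (motive := fun A B _ _ => Commute A B) ?_
      (fun _ _ => Commute.one_left _) (fun _ _ => Commute.one_right _)
      (fun _ _ _ _ _ _ h h' => h.mul_left h') (fun _ _ _ _ _ _ h h' => h.mul_right h') hA hB
    rintro _ _ ⟨s, n, rfl⟩ ⟨t, m, rfl⟩
    exact ((Commute.sum_left _ _ _ fun i _ => Commute.sum_right _ _ _ fun j _ =>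
      (hcomm s t).pow_pow i j).smul_left _).smul_right _
  let P : C(X, ℝ) → Set ℝ := fun f => {c | ∃ A ∈ M, ∀ x, A f x ≤ c}
  have hbd : ∀ f, BddBelow (P f) := by
    intro f
    refine ⟨-‖f‖, ?_⟩
    rintro c ⟨A, hA, h⟩
    obtain ⟨x⟩ := ‹Nonempty X›
    exact ((hM A hA).lower f _ (fun x => (abs_le.1 (f.norm_coe_le_norm x)).1) x).trans (h x)
  have hne : ∀ f, (P f).Nonempty := fun f =>
    ⟨‖f‖, 1, M.one_mem, fun x => (abs_le.1 (f.norm_coe_le_norm x)).2⟩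
  have hsm : ∀ c : ℝ, 0 < c → ∀ f, sInf (P (c • f)) ≤ c * sInf (P f) := by
    intro c hc f
    rw [← div_le_iff₀' hc]
    refine le_csInf (hne f) ?_
    rintro d ⟨A, hA, h⟩
    rw [div_le_iff₀' hc]
    refine csInf_le (hbd _) ⟨A, hA, fun x => ?_⟩
    simpa using mul_le_mul_of_nonneg_left (h x) hc.le
  have hp : ∀ c : ℝ, 0 < c → ∀ f, sInf (P (c • f)) = c * sInf (P f) := by
    intro c hc f
    refine le_antisymm (hsm c hc f) ?_
    have := hsm c⁻¹ (inv_pos.2 hc) (c • f)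
    rw [smul_smul, inv_mul_cancel₀ hc.ne', one_smul, ← div_eq_inv_mul, le_div_iff₀' hc] at this
    exact this
  have hadd : ∀ f g, sInf (P (f + g)) ≤ sInf (P f) + sInf (P g) := by
    intro f g
    rw [← sub_le_iff_le_add]
    refine le_csInf (hne f) ?_
    rintro c ⟨A, hA, h⟩
    rw [sub_le_comm]
    refine le_csInf (hne g) ?_
    rintro d ⟨B, hB, h'⟩
    rw [sub_le_iff_le_add']
    refine csInf_le (hbd _) ⟨A * B, M.mul_mem hA hB, fun x => ?_⟩
    have e : (A * B) (f + g) = B (A f) + A (B g) := by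
      rw [map_add]; congr 1; rw [hMc A hA B hB]; rfl
    rw [e, ContinuousMap.add_apply]
    exact add_le_add (hM B hB _ _ h x) (hM A hA _ _ h' x)
  obtain ⟨L, -, hL⟩ := exists_extension_of_le_sublinear (⊥ : C(X, ℝ) →ₗ.[ℝ] ℝ)
    (fun f => sInf (P f)) hp hadd (by
      rintro ⟨x, hx⟩
      have hx0 : x = 0 := (Submodule.mem_bot ℝ).1 hx
      subst hx0
      have h0 : sInf (P 0) = 0 := by
        have := hp 2 (by norm_num) 0
        rw [smul_zero] at this
        linarith
      have : (⟨0, hx⟩ : (⊥ : C(X, ℝ) →ₗ.[ℝ] ℝ).domain) = 0 := rfl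
      rw [this, LinearPMap.map_zero]
      exact h0.ge)
  have hLP : ∀ f c, c ∈ P f → L f ≤ c := fun f c h => (hL f).trans (csInf_le (hbd f) h)
  have key : ∀ s f, L (T s f) ≤ L f := by
    intro s f
    have hn : ∀ n : ℕ, L (T s f - f) ≤ 2 * ‖f‖ * (1 / ((n : ℝ) + 1)) := by
      intro n
      refine hLP _ _ ⟨bkAvg (T s) n, Submonoid.subset_closure ⟨s, n, rfl⟩, fun x => ?_⟩
      rw [bkAvg_apply_sub, one_div, mul_comm]
      refine mul_le_mul_of_nonneg_right ?_ (by positivity)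
      have h1 := ((hT s).pow (n + 1)) f ‖f‖ (fun x => (abs_le.1 (f.norm_coe_le_norm x)).2) x
      have h2 := (abs_le.1 (f.norm_coe_le_norm x)).1
      linarith
    have hl : Tendsto (fun n : ℕ => 2 * ‖f‖ * (1 / ((n : ℝ) + 1))) atTop (𝓝 0) := by
      simpa using (tendsto_one_div_add_atTop_nhds_zero_nat (𝕜 := ℝ)).const_mul (2 * ‖f‖)
    have := ge_of_tendsto' hl hn
    rw [map_sub] at this
    linarith
  refine ⟨L, fun f c h => hLP f c ⟨1, M.one_mem, h⟩, fun s f => le_antisymm (key s f) ?_⟩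
  have := key s (-f)
  rw [map_neg, map_neg, map_neg] at this
  linarith

/-- Theorem 4.11 (Bogolioubov–Krylov): an abelian semigroup acting on a non-empty compact
Hausdorff space (with each map `x ↦ s·x` continuous) admits an invariant Radon probability
measure. -/
theorem bogolioubov_krylov
    {S X : Type*} [CommSemigroup S]
    [TopologicalSpace X] [CompactSpace X] [T2Space X] [Nonempty X]
    [MeasurableSpace X] [BorelSpace X]
    (act : S → X → X)
    (hc : ∀ s, Continuous (act s))
    (hmul : ∀ s s' x, act (s * s') x = act s (act s' x)) :
    ∃ μ : Measure X, IsProbabilityMeasure μ ∧ μ.Regular ∧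
      ∀ (f : C(X, ℝ)) (s : S), ∫ x, f (act s x) ∂μ = ∫ x, f x ∂μ := by
  let T : S → Module.End ℝ C(X, ℝ) := fun s =>
    { toFun := fun f => f.comp ⟨act s, hc s⟩
      map_add' := fun f g => rfl
      map_smul' := fun c f => rfl }
  have hTa : ∀ s f x, T s f x = f (act s x) := fun _ _ _ => rfl
  obtain ⟨L, hL, hinv⟩ := bk_functional T (fun s f c h x => h (act s x)) (by
    intro s t
    refine LinearMap.ext fun f => ContinuousMap.ext fun x => ?_
    change f (act t (act s x)) = f (act s (act t x))
    rw [← hmul, ← hmul, mul_comm])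
  let Λ : C_c(X, ℝ) →ₚ[ℝ] ℝ := PositiveLinearMap.mk₀
    { toFun := fun f => L f.toContinuousMap
      map_add' := fun f g => L.map_add f.toContinuousMap g.toContinuousMap
      map_smul' := fun c f => L.map_smul c f.toContinuousMap }
    (by
      intro f hf
      have := hL (-f.toContinuousMap) 0 (fun x => by
        have h := hf x
        simpa using h)
      rw [map_neg] at this
      change 0 ≤ L f.toContinuousMap
      linarith)
  have hint : ∀ f : C(X, ℝ), ∫ x, f x ∂(RealRMK.rieszMeasure Λ) = L f := fun f =>
    RealRMK.integral_rieszMeasure Λ ⟨f, HasCompactSupport.of_compactSpace f⟩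
  refine ⟨RealRMK.rieszMeasure Λ, ?_, inferInstance, fun f s => ?_⟩
  · have h1 : L 1 = 1 := by
      refine le_antisymm (hL 1 1 (fun x => le_rfl)) ?_
      have := hL (-1) (-1) (fun x => by simp)
      rw [map_neg] at this
      linarith
    have h2 := hint 1
    rw [h1] at h2
    constructor
    have h3 : (RealRMK.rieszMeasure Λ).real Set.univ = 1 := by simpa using h2
    rw [← ENNReal.toReal_eq_one_iff]
    exact h3
  · rw [hint f, ← hinv s f, ← hint (T s f)]
    rfl
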